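/- arXiv:2503.11463 — 2 statements merged into one kernel-verified Lean document; each statement's English description precedes it below -/
import Mathlib

section
/- Let n ≥ 1, let σ be a permutation of [n], and let x : ℕ → {0,1} be a type indicator. Define P* : [n] → ℕ recursively by P*(1) = 1, and for s ∈ [n−1]: P*(s+1) = P*(s) + 1 if either (x(P*(s)) = 0 and σ(s+1) < σ(s)) or (x(P*(s)) = 1 and σ(s+1) > σ(s)), and P*(s+1) = P*(s) otherwise. Then (x, P*) sorts σ, and P* uses the minimum number of piles among all sorts of σ on x: every P with (x, P) sorting σ and P(1) = 1 satisfies P(n) ≥ P*(n). -/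
/-!
Say that `s` precedes `t` if `s` lies in an earlier pile, or in the same pile and comes out of it
first. Precedence is a strict order on cards, and sorting means that it agrees with `<` on `[n]`.
The greedy rule opens a new pile exactly when keeping `s + 1` in the pile of `s` would break the
precedence of `s` over `s + 1`, so consecutive cards are always in order (`pstar_step`). By
transitivity all cards are (`heteroSorts_of_step`).

For minimality, the greedy assignment stays pointwise below any sorting `P` with `P 1 = 1`: when
the two agree at `s` and the greedy one moves to a new pile, `P` has to move as well, and when
`Pstar s < P s` the greedy one cannot overtake in a single step.
-/

/-- The heterogeneous shuffle `(x, P)` sorts `σ`: for all `s, t ∈ [n]`,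
`s < t` iff `P s < P t`, or `P s = P t` and (`σ s < σ t` when pile `P s` is a
queue (`x (P s) = 0`), respectively `σ s > σ t` when it is a stack (`x (P s) = 1`)). -/
def HeteroSorts (n : ℕ) (x : ℕ → Fin 2) (σ P : ℕ → ℕ) : Prop :=
  ∀ s ∈ Finset.Icc 1 n, ∀ t ∈ Finset.Icc 1 n,
    (s < t ↔ P s < P t ∨ (P s = P t ∧
      (if x (P s) = 0 then σ s < σ t else σ t < σ s)))

/-- Card `s` comes out before card `t` in the shuffle `(x, P)`: the right-hand side of the
equivalence defining `HeteroSorts`. -/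
def Precedes (x : ℕ → Fin 2) (σ P : ℕ → ℕ) (s t : ℕ) : Prop :=
  P s < P t ∨ (P s = P t ∧ (if x (P s) = 0 then σ s < σ t else σ t < σ s))

theorem Precedes.trans {x : ℕ → Fin 2} {σ P : ℕ → ℕ} {s t u : ℕ}
    (h₁ : Precedes x σ P s t) (h₂ : Precedes x σ P t u) : Precedes x σ P s u := by
  unfold Precedes at *
  rcases h₁ with h₁ | ⟨e₁, h₁⟩
  · left
    rcases h₂ with h₂ | ⟨e₂, -⟩ <;> omega
  · rcases h₂ with h₂ | ⟨e₂, h₂⟩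
    · left
      omega
    · right
      rw [← e₁] at h₂
      refine ⟨e₁.trans e₂, ?_⟩
      split_ifs at * <;> omega

theorem Precedes.irrefl {x : ℕ → Fin 2} {σ P : ℕ → ℕ} {s : ℕ} : ¬ Precedes x σ P s s := by
  simp [Precedes]

/-- Checking consecutive cards suffices for sorting. -/
theorem heteroSorts_of_step {n : ℕ} {x : ℕ → Fin 2} {σ P : ℕ → ℕ}
    (hstep : ∀ s, 1 ≤ s → s + 1 ≤ n → Precedes x σ P s (s + 1)) : HeteroSorts n x σ P := by
  have hlt : ∀ s t, 1 ≤ s → s + 1 ≤ t → t ≤ n → Precedes x σ P s t := by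
    intro s t hs hst
    induction t, hst using Nat.le_induction with
    | base => exact hstep s hs
    | succ t hst ih => exact fun ht => (ih (by omega)).trans (hstep t (by omega) ht)
  intro s hs t ht
  rw [Finset.mem_Icc] at hs ht
  refine ⟨fun h => hlt s t hs.1 h ht.2, fun h => ?_⟩
  rcases lt_trichotomy s t with hst | rfl | hts
  · exact hst
  · exact (Precedes.irrefl h).elim
  · exact (Precedes.irrefl (Precedes.trans h (hlt t s ht.1 hts hs.2))).elim

/-- One step of the greedy rule keeps consecutive cards in order. Distinctness of the positions is
needed because the rule opens a new pile only on a strict violation. -/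
theorem pstar_step {x : ℕ → Fin 2} {σ Pstar : ℕ → ℕ} {s : ℕ} (hne : σ s ≠ σ (s + 1))
    (hrec : Pstar (s + 1) =
      if (x (Pstar s) = 0 ∧ σ (s + 1) < σ s) ∨ (x (Pstar s) = 1 ∧ σ s < σ (s + 1)) then
        Pstar s + 1
      else Pstar s) :
    Precedes x σ Pstar s (s + 1) := by
  unfold Precedes
  split_ifs at hrec with hc
  · left
    omega
  · right
    refine ⟨hrec.symm, ?_⟩
    push Not at hc
    split_ifs with h0
    · have := hc.1 h0
      omega
    · have := hc.2 (by omega)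
      omega

theorem stmt_10 (n : ℕ) (hn : 1 ≤ n) (σ : ℕ → ℕ)
    (hσ : Set.BijOn σ (Set.Icc 1 n) (Set.Icc 1 n))
    (x : ℕ → Fin 2) (Pstar : ℕ → ℕ)
    (hPstar1 : Pstar 1 = 1)
    (hPstarRec : ∀ s ∈ Finset.Icc 1 (n - 1),
      Pstar (s + 1) =
        if (x (Pstar s) = 0 ∧ σ (s + 1) < σ s) ∨
           (x (Pstar s) = 1 ∧ σ s < σ (s + 1)) then
          Pstar s + 1
        else Pstar s) :
    HeteroSorts n x σ Pstar ∧
    ∀ P : ℕ → ℕ, HeteroSorts n x σ P → P 1 = 1 → Pstar n ≤ P n := by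
  constructor
  · refine heteroSorts_of_step fun s hs hsn => pstar_step ?_ (hPstarRec s ?_)
    · intro h
      have := hσ.injOn (Set.mem_Icc.2 ⟨hs, by omega⟩) (Set.mem_Icc.2 ⟨by omega, hsn⟩) h
      omega
    · exact Finset.mem_Icc.2 ⟨hs, by omega⟩
  · intro P hP hP1
    have key : ∀ s, 1 ≤ s → s ≤ n → Pstar s ≤ P s := by
      intro s hs
      induction s, hs using Nat.le_induction with
      | base => omega
      | succ s hs ih =>
        intro hsn
        have hle := ih (by omega)
        have hrec := hPstarRec s (Finset.mem_Icc.2 ⟨hs, by omega⟩)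
        have hprec := (hP s (Finset.mem_Icc.2 ⟨hs, by omega⟩) (s + 1)
          (Finset.mem_Icc.2 ⟨by omega, hsn⟩)).1 (by omega)
        rcases hprec with hlt | ⟨heq, hord⟩
        · split_ifs at hrec <;> omega
        · rcases hle.lt_or_eq with hlt | hPs
          · split_ifs at hrec <;> omega
          · -- Both assignments agree at `s` and `P` keeps its pile, so the greedy rule does too.
            rw [← hPs] at hord
            rw [if_neg] at hrec
            · omega
            · rintro (⟨h0, h⟩ | ⟨h1, h⟩)
              · rw [if_pos h0] at hord
                omega
              · rw [if_neg (by simp [h1])] at hord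
                omega
    exact key n hn le_rfl
end

section
/- Let n ≥ 1, m ≥ 1, T ≥ 0, and let σ be a permutation of [n]. Then σ can be sorted by m queues in T rounds — i.e., there exist pile assignments P_t : [n] → {0, 1, …, m − 1} and permutations σ_0 = σ, σ_1, …, σ_T of [n] with QShuffle(P_t, σ_{t−1}) = σ_t for each t ∈ [T] and σ_T equal to the identity permutation — if and only if ascruns(σ) ≤ m^T. -/
/-!
The sorting problem is a least-significant-digit-first radix sort. Performing rounds `1, …, t` with
pile assignments `P₁, …, P_t` orders the cards lexicographically by `(Lₜ, σ)`, where
`Lₜ = ∑_{j ≤ t} Pⱼ m^(j-1) < m^t` packs the pile numbers as base-`m` digits (`radix_step` is one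
round of this). So `σ` is sorted by `T` rounds iff some labelling `L < m^T` makes
`(L s, σ s)` lexicographically increasing in `s`.

* Such an `L` is weakly increasing and jumps at each descent of `σ`, so `L n` is at least the number
  of descents (`runIndex_le`), which gives `ascRuns n σ ≤ m ^ T`.
* Conversely the index of the ascending run containing `s` (`runIndex`) is such an `L`, and its
  base-`m` digits are the pile assignments. The intermediate permutations are the ranks
  (`rankOn`) of the keys `(Lₜ, σ)`.
-/

/-- `QShuffle(P, σ) = σ'`: a single round of pile shuffle on queues with
assignments `P` transforms `σ` into `σ'`: for all `s, t ∈ [n]`,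
`σ' s < σ' t` iff `(P s, σ s)` is lexicographically less than `(P t, σ t)`. -/
def QShuffle (n : ℕ) (P σ σ' : ℕ → ℕ) : Prop :=
  ∀ s ∈ Finset.Icc 1 n, ∀ t ∈ Finset.Icc 1 n,
    (σ' s < σ' t ↔ P s < P t ∨ (P s = P t ∧ σ s < σ t))

/-- The number of descents of `σ`, `|{s ∈ [n−1] : σ(s+1) < σ(s)}|`. -/
def descents (n : ℕ) (σ : ℕ → ℕ) : ℕ :=
  ((Finset.Icc 1 (n - 1)).filter (fun s => σ (s + 1) < σ s)).card

/-- The number of ascending runs of `σ`, `1 + desc(σ)`. -/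
def ascRuns (n : ℕ) (σ : ℕ → ℕ) : ℕ := 1 + descents n σ

/-- The number of descents of `σ` at positions in `[1, s)`: the index, from `0`, of the ascending
run containing `s`. -/
def runIndex (σ : ℕ → ℕ) (s : ℕ) : ℕ := descents s σ

lemma runIndex_one (σ : ℕ → ℕ) : runIndex σ 1 = 0 := by
  simp [runIndex, descents]

lemma runIndex_succ (σ : ℕ → ℕ) {s : ℕ} (hs : 1 ≤ s) :
    runIndex σ (s + 1) = runIndex σ s + if σ (s + 1) < σ s then 1 else 0 := by
  obtain ⟨k, rfl⟩ : ∃ k, s = k + 1 := ⟨s - 1, by omega⟩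
  have h : Finset.Icc 1 (k + 1) = insert (k + 1) (Finset.Icc 1 k) := by
    ext x; simp only [Finset.mem_Icc, Finset.mem_insert]; omega
  simp only [runIndex, descents, Nat.add_sub_cancel]
  rw [h, Finset.filter_insert]
  split_ifs with hd
  · rw [Finset.card_insert_of_notMem]
    simp
  · simp

lemma runIndex_mono (σ : ℕ → ℕ) {s u : ℕ} (hs : 1 ≤ s) (hsu : s ≤ u) :
    runIndex σ s ≤ runIndex σ u := by
  induction u, hsu using Nat.le_induction with
  | base => exact le_rfl
  | succ u hu ih => rw [runIndex_succ σ (hs.trans hu)]; omega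

/-- A labelling that is lexicographically increasing together with `σ` dominates the run index. -/
lemma runIndex_le {n : ℕ} {σ L : ℕ → ℕ}
    (h : ∀ s, 1 ≤ s → s + 1 ≤ n → L s < L (s + 1) ∨ (L s = L (s + 1) ∧ σ s < σ (s + 1)))
    {s : ℕ} (hs : 1 ≤ s) (hsn : s ≤ n) : runIndex σ s ≤ L s := by
  induction s, hs using Nat.le_induction with
  | base => simp [runIndex_one]
  | succ s hs ih =>
    rw [runIndex_succ σ hs]
    have h1 := h s hs hsn
    have h2 := ih (by omega)
    split_ifs <;> omega

/-- Lexicographic comparison of `(runIndex σ s, σ s)` recovers the order of the labels. -/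
lemma runIndex_lex {n : ℕ} {σ : ℕ → ℕ} (hσ : Set.InjOn σ (Set.Icc 1 n)) {s u : ℕ}
    (hs : 1 ≤ s) (hsu : s + 1 ≤ u) (hu : u ≤ n) :
    runIndex σ s < runIndex σ u ∨ (runIndex σ s = runIndex σ u ∧ σ s < σ u) := by
  induction u, hsu using Nat.le_induction with
  | base =>
    have hne : σ (s + 1) ≠ σ s := fun he => by
      have := hσ ⟨by omega, hu⟩ ⟨hs, by omega⟩ he
      omega
    rw [runIndex_succ σ hs]
    split_ifs <;> omega
  | succ u hsu ih =>
    have hne : σ (u + 1) ≠ σ u := fun he => by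
      have := hσ ⟨by omega, hu⟩ ⟨by omega, by omega⟩ he
      omega
    have h1 := ih (by omega)
    rw [runIndex_succ σ (by omega : 1 ≤ u)]
    split_ifs <;> omega

/-- A two-digit comparison with low digits `a, b < M`. -/
lemma digit_lt_iff {M a b p q : ℕ} (ha : a < M) (hb : b < M) :
    a + M * p < b + M * q ↔ p < q ∨ (p = q ∧ a < b) := by
  rcases lt_trichotomy p q with h | rfl | h
  · have : M * (p + 1) ≤ M * q := Nat.mul_le_mul_left M h
    rw [Nat.mul_add] at this
    omega
  · omega
  · have : M * (q + 1) ≤ M * p := Nat.mul_le_mul_left M h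
    rw [Nat.mul_add] at this
    omega

lemma digit_eq_iff {M a b p q : ℕ} (ha : a < M) (hb : b < M) :
    a + M * p = b + M * q ↔ p = q ∧ a = b := by
  have h1 := digit_lt_iff (p := p) (q := q) ha hb
  have h2 := digit_lt_iff (p := q) (q := p) hb ha
  omega

/-- Sorting stably by a new digit `p` after sorting by `(a, x)` is sorting by `(a + M p, x)`. -/
lemma radix_step {M a b p q x y : ℕ} (ha : a < M) (hb : b < M) :
    (p < q ∨ (p = q ∧ (a < b ∨ (a = b ∧ x < y)))) ↔
      (a + M * p < b + M * q ∨ (a + M * p = b + M * q ∧ x < y)) := by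
  rw [digit_lt_iff ha hb, digit_eq_iff ha hb]
  tauto

/-- The rank of `s` among `[n]` when ordered by the key `K`, counted from `1`. -/
def rankOn (n : ℕ) (K : ℕ → ℕ) (s : ℕ) : ℕ := ((Finset.Icc 1 n).filter (fun u => K u ≤ K s)).card

lemma rankOn_lt_iff {n : ℕ} (K : ℕ → ℕ) {s u : ℕ}
    (hu : u ∈ Finset.Icc 1 n) : rankOn n K s < rankOn n K u ↔ K s < K u := by
  have key : ∀ a b, K a ≤ K b → rankOn n K a ≤ rankOn n K b := fun a b hab =>
    Finset.card_le_card (Finset.monotone_filter_right _ (fun _ _ h => le_trans h hab))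
  constructor
  · intro h
    by_contra hc
    exact absurd (key u s (not_lt.mp hc)) (not_le.mpr h)
  · intro h
    apply Finset.card_lt_card
    rw [Finset.ssubset_iff_of_subset
      (Finset.monotone_filter_right _ (fun _ _ h' => le_trans h' h.le))]
    exact ⟨u, by simpa using hu, by simp [h]⟩

lemma rankOn_bijOn {n : ℕ} {K : ℕ → ℕ} (hK : Set.InjOn K (Set.Icc 1 n)) :
    Set.BijOn (rankOn n K) (Set.Icc 1 n) (Set.Icc 1 n) := by
  have hmaps : Set.MapsTo (rankOn n K) (Set.Icc 1 n) (Set.Icc 1 n) := by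
    intro s hs
    constructor
    · exact Finset.card_pos.mpr ⟨s, by simpa using hs⟩
    · exact (Finset.card_filter_le _ _).trans (by simp)
  have hinj : Set.InjOn (rankOn n K) (Set.Icc 1 n) := by
    intro s hs u hu h
    have h1 := rankOn_lt_iff K (s := s) (Finset.mem_Icc.mpr hu)
    have h2 := rankOn_lt_iff K (s := u) (Finset.mem_Icc.mpr hs)
    exact hK hs hu (by omega)
  refine ⟨hmaps, hinj, ?_⟩
  have := Finset.surjOn_of_injOn_of_card_le (s := Finset.Icc 1 n) (t := Finset.Icc 1 n)
    (rankOn n K) (by simpa using hmaps) (by simpa using hinj) le_rfl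
  simpa using this

/-- The only increasing permutation of `[n]` is the identity. -/
lemma eq_self_of_strictMono {n : ℕ} {f : ℕ → ℕ} (hf : Set.MapsTo f (Set.Icc 1 n) (Set.Icc 1 n))
    (hmono : ∀ s u, 1 ≤ s → s < u → u ≤ n → f s < f u) {s : ℕ} (hs : 1 ≤ s) (hsn : s ≤ n) :
    f s = s := by
  have hlow : ∀ s, 1 ≤ s → s ≤ n → s ≤ f s := by
    intro s hs
    induction s, hs using Nat.le_induction with
    | base => intro h; exact (hf ⟨le_rfl, h⟩).1
    | succ s hs ih =>
      intro h
      have := hmono s (s + 1) hs (by omega) h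
      have := ih (by omega)
      omega
  have hhigh : ∀ d s, 1 ≤ s → s + d = n → f s ≤ s := by
    intro d
    induction d with
    | zero => intro s h1 h2; have := (hf ⟨h1, by omega⟩).2; omega
    | succ d ih =>
      intro s h1 h2
      have := ih (s + 1) (by omega) (by omega)
      have := hmono s (s + 1) h1 (by omega) (by omega)
      omega
  exact le_antisymm (hhigh (n - s) s hs (by omega)) (hlow s hs hsn)

theorem stmt_16 (n m T : ℕ) (hn : 1 ≤ n) (hm : 1 ≤ m)
    (σ : ℕ → ℕ) (hσ : Set.BijOn σ (Set.Icc 1 n) (Set.Icc 1 n)) :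
    (∃ (P : ℕ → ℕ → ℕ) (σs : ℕ → ℕ → ℕ),
      σs 0 = σ ∧
      (∀ t ∈ Finset.Icc 1 T,
        Set.BijOn (σs t) (Set.Icc 1 n) (Set.Icc 1 n)) ∧
      (∀ t ∈ Finset.Icc 1 T, ∀ s ∈ Finset.Icc 1 n, P t s < m) ∧
      (∀ t ∈ Finset.Icc 1 T, QShuffle n (P t) (σs (t - 1)) (σs t)) ∧
      (∀ s ∈ Finset.Icc 1 n, σs T s = s)) ↔
    ascRuns n σ ≤ m ^ T := by
  constructor
  · rintro ⟨P, σs, h0, -, hP, hQ, hid⟩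
    -- `L` is the labelling whose base-`m` digits are the pile numbers of the first `t` rounds.
    have key : ∀ t ≤ T, ∃ L : ℕ → ℕ, (∀ s ∈ Finset.Icc 1 n, L s < m ^ t) ∧
        ∀ s ∈ Finset.Icc 1 n, ∀ u ∈ Finset.Icc 1 n,
          (σs t s < σs t u ↔ L s < L u ∨ (L s = L u ∧ σ s < σ u)) := by
      intro t
      induction t with
      | zero => intro _; exact ⟨fun _ => 0, by simp, by simp [h0]⟩
      | succ t ih =>
        intro ht
        obtain ⟨L, hL, hlex⟩ := ih (by omega)
        have htT : t + 1 ∈ Finset.Icc 1 T := Finset.mem_Icc.mpr ⟨by omega, ht⟩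
        refine ⟨fun s => L s + m ^ t * P (t + 1) s, ?_, ?_⟩
        · intro s hs
          have h1 : m ^ t * (P (t + 1) s + 1) ≤ m ^ t * m :=
            Nat.mul_le_mul_left _ (hP _ htT s hs)
          have h2 := hL s hs
          rw [Nat.mul_add] at h1
          rw [pow_succ]
          dsimp only
          omega
        · intro s hs u hu
          rw [hQ _ htT s hs u hu, Nat.add_sub_cancel, hlex s hs u hu]
          exact radix_step (hL s hs) (hL u hu)
    obtain ⟨L, hL, hlex⟩ := key T le_rfl
    have h1 : runIndex σ n ≤ L n := by
      refine runIndex_le (n := n) (fun s hs hsn => ?_) hn le_rfl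
      have hs' : s ∈ Finset.Icc 1 n := Finset.mem_Icc.mpr ⟨hs, by omega⟩
      have hs'' : s + 1 ∈ Finset.Icc 1 n := Finset.mem_Icc.mpr ⟨by omega, hsn⟩
      rw [← hlex s hs' _ hs'', hid s hs', hid _ hs'']
      omega
    have h2 := hL n (Finset.mem_Icc.mpr ⟨hn, le_rfl⟩)
    unfold runIndex at h1
    unfold ascRuns
    omega
  · intro h
    have hr : ∀ s ∈ Finset.Icc 1 n, runIndex σ s < m ^ T := by
      intro s hs
      rw [Finset.mem_Icc] at hs
      have h1 := runIndex_mono σ hs.1 hs.2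
      have h2 : runIndex σ n = descents n σ := rfl
      unfold ascRuns at h
      omega
    have hlt : ∀ s ∈ Finset.Icc 1 n, σ s < n + 1 := fun s hs =>
      Nat.lt_succ_of_le (hσ.mapsTo (Finset.mem_Icc.mp hs)).2
    -- `K t` encodes the pair (low `t` digits of the run index, `σ`) as a single number.
    let K : ℕ → ℕ → ℕ := fun t s => σ s + (n + 1) * (runIndex σ s % m ^ t)
    let τ : ℕ → ℕ → ℕ := fun t => if t = 0 then σ else rankOn n (K t)
    have hK : ∀ t, Set.InjOn (K t) (Set.Icc 1 n) := by
      intro t s hs u hu he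
      have := (digit_eq_iff (hlt s (Finset.mem_Icc.mpr hs)) (hlt u (Finset.mem_Icc.mpr hu))).mp he
      exact hσ.injOn hs hu this.2
    have hbij : ∀ t, Set.BijOn (τ t) (Set.Icc 1 n) (Set.Icc 1 n) := by
      intro t
      by_cases ht : t = 0
      · simpa [τ, ht] using hσ
      · simpa [τ, ht] using rankOn_bijOn (hK t)
    have hτ : ∀ t, ∀ s ∈ Finset.Icc 1 n, ∀ u ∈ Finset.Icc 1 n,
        (τ t s < τ t u ↔ runIndex σ s % m ^ t < runIndex σ u % m ^ t ∨
          (runIndex σ s % m ^ t = runIndex σ u % m ^ t ∧ σ s < σ u)) := by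
      intro t s hs u hu
      by_cases ht : t = 0
      · simp [τ, ht, Nat.mod_one]
      · simp only [τ, ht, if_false]
        rw [rankOn_lt_iff (K t) hu]
        exact digit_lt_iff (hlt s hs) (hlt u hu)
    have hpos : ∀ t, 0 < m ^ t := fun t => Nat.pow_pos hm
    refine ⟨fun t s => runIndex σ s / m ^ (t - 1) % m, τ, by simp [τ], fun t _ => hbij t,
      fun t _ s _ => Nat.mod_lt _ hm, ?_, ?_⟩
    · intro t ht s hs u hu
      obtain ⟨k, rfl⟩ : ∃ k, t = k + 1 := ⟨t - 1, by have := (Finset.mem_Icc.mp ht).1; omega⟩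
      simp only [Nat.add_sub_cancel]
      rw [hτ (k + 1) s hs u hu, hτ k s hs u hu, Nat.mod_pow_succ, Nat.mod_pow_succ]
      exact (radix_step (Nat.mod_lt _ (hpos k)) (Nat.mod_lt _ (hpos k))).symm
    · intro s hs
      refine eq_self_of_strictMono (hbij T).mapsTo (fun a b ha hab hb => ?_)
        (Finset.mem_Icc.mp hs).1 (Finset.mem_Icc.mp hs).2
      have ha' : a ∈ Finset.Icc 1 n := Finset.mem_Icc.mpr ⟨ha, by omega⟩
      have hb' : b ∈ Finset.Icc 1 n := Finset.mem_Icc.mpr ⟨by omega, hb⟩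
      rw [hτ T a ha' b hb', Nat.mod_eq_of_lt (hr a ha'), Nat.mod_eq_of_lt (hr b hb')]
      exact runIndex_lex hσ.injOn ha hab hb
end
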